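/- Let Ω = (a,b) ⊂ ℝ be a bounded open interval with a < b, let D > 0, α ≥ 0, and let constants k₁, k₂, k₃, k₄ > 0, k₆, k₇, k₈, k₉ ≥ 0, M > 0, c₂ > 0 be given, and let c₁ > 0 be such that ‖φ‖_{L²(a,b)} + ‖φ‖_∞ ≤ c₁ ‖φ'‖_{L²(a,b)} for every C¹ function φ on [a,b] with φ(a) = φ(b) = 0. Then there exists k₁₃ > 0, depending only on a, b, D, k₁, …, k₉, M, c₁, c₂, with the following property: whenever ε ∈ (0,1), T > 0, γ, ĥ ∈ C²([0,∞)), Γ ∈ C¹([0,∞)), and (w,v,u,Θ) is a classical solution of the ε-regularized system on Ω × (0,T) such that pointwise on [a,b] × (0,T) one has k₁ ≤ γ(Θ) ≤ k₂, k₃ ≤ ĥ(Θ) ≤ k₄, |γ'(Θ)| ≤ k₆, |ĥ'(Θ)| ≤ k₇, |γ''(Θ)| ≤ k₈, |ĥ''(Θ)| ≤ k₉ and |Θ_t| ≤ M, and such that ‖Θ_xx(·,t)‖_∞ + ‖Θ_x(·,t)‖_∞² ≤ c₂ (y(t) + 1) for all t ∈ (0,T), where y(t) := (1/2)∫_a^b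 w_x² + (1/2)∫_a^b γ(Θ) v_xx² + ∫_a^b ĥ(Θ) u_xx v_xx + (B/2)∫_a^b u_xx² + ε ∫_a^b ĥ(Θ) u_xxx² with B := 4k₄²/k₁, then y'(t) + k₁ ε ∫_a^b v_xxx² ≤ k₁₃ (y(t)² + y(t)) for all t ∈ (0,T). -/

import Mathlib

/-!
Write `γ`, `ĥ` for `γ(Θ)`, `ĥ(Θ)`. Differentiating the energy `y` under the integral sign, inserting
the equations (differentiated in `x`) and integrating by parts, the top order products
`γ v_xx w_xx`, `ĥ u_xx w_xx` and `2 ε ĥ u_xxx v_xxx` cancel. The boundary terms vanish because of the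
Neumann conditions and because the equations for `v` and `u`, differentiated in `x` at an end point,
force `v_xxx = u_xxx = 0` there. The integrations by parts are packed into one pointwise identity
(`flux_hasDerivAt`): the integrand of `y'` is a remainder `R` plus the derivative of a flux vanishing
at `a` and `b`, so `y' = ∫ R`.

The mixed terms `ε γ' Θ_x v_xx v_xxx`, `ε ĥ' Θ_x u_xx v_xxx` and `ε² ĥ' Θ_x u_xxx u_xxxx` are also
removed by integration by parts (`Θ_x` vanishes at the boundary), so that `-ε γ v_xxx²` remains
untouched and absorbs the full `k₁ ε v_xxx²`. What is left is a quadratic form in `w_x`, `v_x`,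
`v_xx`, `u_x`, `u_xx`, `√ε u_xxx` with coefficients of size `1 + ‖Θ_xx‖_∞ + ‖Θ_x‖_∞² ≲ 1 + y`
(`remainder_le`). The Poincaré inequality controls `v_x`, `u_x` by `v_xx`, `u_xx`, and the energy
controls the remaining integrals (`energy_density_ge`), which gives `C (1 + y) y`.
-/

open MeasureTheory Set

/-- Partial derivative in the space variable. -/
noncomputable def pdx (f : ℝ → ℝ → ℝ) : ℝ → ℝ → ℝ := fun x t => deriv (fun y => f y t) x

/-- Partial derivative in the time variable. -/
noncomputable def pdt (f : ℝ → ℝ → ℝ) : ℝ → ℝ → ℝ := fun x t => deriv (fun s => f x s) t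

/-- A classical solution of the ε-regularized system
`w_t = ε w_xx + (γ(Θ) v_x)_x + (ĥ(Θ) u_x)_x − α w`,
`v_t = ε v_xx + w`, `u_t = ε u_xx + v`, `Θ_t = D Θ_xx + Γ(Θ) v_x²`
on `(a,b) × (0,T)` with homogeneous Neumann boundary conditions. -/
def IsEpsSolution (a b D α ε T : ℝ) (γ hγ Γ : ℝ → ℝ) (w v u Θ : ℝ → ℝ → ℝ) : Prop :=
  ContDiff ℝ (⊤ : ℕ∞) (Function.uncurry w) ∧ ContDiff ℝ (⊤ : ℕ∞) (Function.uncurry v) ∧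
  ContDiff ℝ (⊤ : ℕ∞) (Function.uncurry u) ∧ ContDiff ℝ (⊤ : ℕ∞) (Function.uncurry Θ) ∧
  (∀ x ∈ Ioo a b, ∀ t ∈ Ioo (0:ℝ) T,
      pdt w x t = ε * pdx (pdx w) x t
        + pdx (fun y s => γ (Θ y s) * pdx v y s) x t
        + pdx (fun y s => hγ (Θ y s) * pdx u y s) x t - α * w x t) ∧
  (∀ x ∈ Ioo a b, ∀ t ∈ Ioo (0:ℝ) T, pdt v x t = ε * pdx (pdx v) x t + w x t) ∧
  (∀ x ∈ Ioo a b, ∀ t ∈ Ioo (0:ℝ) T, pdt u x t = ε * pdx (pdx u) x t + v x t) ∧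
  (∀ x ∈ Ioo a b, ∀ t ∈ Ioo (0:ℝ) T,
      pdt Θ x t = D * pdx (pdx Θ) x t + Γ (Θ x t) * (pdx v x t) ^ 2) ∧
  (∀ t ∈ Ioo (0:ℝ) T,
      pdx w a t = 0 ∧ pdx w b t = 0 ∧ pdx v a t = 0 ∧ pdx v b t = 0 ∧
      pdx u a t = 0 ∧ pdx u b t = 0 ∧ pdx Θ a t = 0 ∧ pdx Θ b t = 0)

/-- The supremum norm of `|f|` over `[a,b]`. -/
noncomputable def supIcc (a b : ℝ) (f : ℝ → ℝ) : ℝ := sSup ((fun x => |f x|) '' Icc a b)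

/-- The `L²(a,b)` norm. -/
noncomputable def l2norm (a b : ℝ) (f : ℝ → ℝ) : ℝ := Real.sqrt (∫ x in a..b, (f x) ^ 2)

/-! ### Partial derivatives of functions of two variables -/

theorem hasDerivAt_pdx {f : ℝ → ℝ → ℝ} (hf : ContDiff ℝ 1 (Function.uncurry f)) (x t : ℝ) :
    HasDerivAt (fun y => f y t) (pdx f x t) x := by
  have h : ContDiff ℝ 1 (fun y => f y t) :=
    hf.comp (f := fun y : ℝ => (y, t)) (by fun_prop)
  exact (h.differentiable one_ne_zero x).hasDerivAt

theorem hasDerivAt_pdt {f : ℝ → ℝ → ℝ} (hf : ContDiff ℝ 1 (Function.uncurry f)) (x t : ℝ) :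
    HasDerivAt (fun s => f x s) (pdt f x t) t := by
  have h : ContDiff ℝ 1 (fun s => f x s) :=
    hf.comp (f := fun s : ℝ => (x, s)) (by fun_prop)
  exact (h.differentiable one_ne_zero t).hasDerivAt

theorem pdx_eq_fderiv {f : ℝ → ℝ → ℝ} (hf : ContDiff ℝ 1 (Function.uncurry f)) :
    Function.uncurry (pdx f) = fun p => fderiv ℝ (Function.uncurry f) p (1, 0) := by
  funext p
  obtain ⟨x, t⟩ := p
  have h1 := (hf.differentiable one_ne_zero (x, t)).hasFDerivAt
  have h2 : HasDerivAt (fun y : ℝ => (y, t)) ((1 : ℝ), (0 : ℝ)) x :=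
    (hasDerivAt_id x).prodMk (hasDerivAt_const x t)
  exact (h1.comp_hasDerivAt x h2).deriv

theorem pdt_eq_fderiv {f : ℝ → ℝ → ℝ} (hf : ContDiff ℝ 1 (Function.uncurry f)) :
    Function.uncurry (pdt f) = fun p => fderiv ℝ (Function.uncurry f) p (0, 1) := by
  funext p
  obtain ⟨x, t⟩ := p
  have h1 := (hf.differentiable one_ne_zero (x, t)).hasFDerivAt
  have h2 : HasDerivAt (fun s : ℝ => (x, s)) ((0 : ℝ), (1 : ℝ)) t :=
    (hasDerivAt_const t x).prodMk (hasDerivAt_id t)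
  exact (h1.comp_hasDerivAt t h2).deriv

theorem continuous_pdt {f : ℝ → ℝ → ℝ} (hf : ContDiff ℝ 1 (Function.uncurry f)) :
    Continuous (Function.uncurry (pdt f)) := by
  rw [pdt_eq_fderiv hf]
  exact (hf.continuous_fderiv one_ne_zero).clm_apply continuous_const

theorem smooth_pdx {f : ℝ → ℝ → ℝ} (hf : ContDiff ℝ (⊤ : ℕ∞) (Function.uncurry f)) :
    ContDiff ℝ (⊤ : ℕ∞) (Function.uncurry (pdx f)) := by
  rw [pdx_eq_fderiv (hf.of_le (by exact_mod_cast le_top))]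
  exact (hf.fderiv_right (m := (⊤ : ℕ∞)) (by simp)).clm_apply contDiff_const

theorem smooth_pdt {f : ℝ → ℝ → ℝ} (hf : ContDiff ℝ (⊤ : ℕ∞) (Function.uncurry f)) :
    ContDiff ℝ (⊤ : ℕ∞) (Function.uncurry (pdt f)) := by
  rw [pdt_eq_fderiv (hf.of_le (by exact_mod_cast le_top))]
  exact (hf.fderiv_right (m := (⊤ : ℕ∞)) (by simp)).clm_apply contDiff_const

theorem pdx_pdt_comm {f : ℝ → ℝ → ℝ} (hf : ContDiff ℝ (⊤ : ℕ∞) (Function.uncurry f))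
    (x t : ℝ) : pdx (pdt f) x t = pdt (pdx f) x t := by
  have hf1 : ContDiff ℝ 1 (Function.uncurry f) := hf.of_le (by exact_mod_cast le_top)
  have h2 : Differentiable ℝ (fderiv ℝ (Function.uncurry f)) :=
    (hf.fderiv_right (m := (⊤ : ℕ∞)) (by simp)).differentiable (by simp)
  have e1 := congrFun (pdx_eq_fderiv ((smooth_pdt hf).of_le (by exact_mod_cast le_top))) (x, t)
  have e2 := congrFun (pdt_eq_fderiv ((smooth_pdx hf).of_le (by exact_mod_cast le_top))) (x, t)
  rw [pdt_eq_fderiv hf1] at e1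
  rw [pdx_eq_fderiv hf1] at e2
  have hs := (hf.contDiffAt (x := (x, t))).isSymmSndFDerivAt
    (n := ((⊤ : ℕ∞) : WithTop ℕ∞))
    (by rw [minSmoothness_of_isRCLikeNormedField]; exact WithTop.coe_le_coe.2 (le_top : (2 : ℕ∞) ≤ ⊤))
  have := hs (1, 0) (0, 1)
  simp only [Function.uncurry_apply_pair] at e1 e2
  rw [e1, e2, fderiv_clm_apply (h2 _) (by fun_prop), fderiv_clm_apply (h2 _) (by fun_prop)]
  simpa using this

/-- Differentiation under the integral sign for a jointly `C¹` integrand: on the compact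
rectangle `[a,b] × [t-1,t+1]` the time derivative is bounded by a constant. -/
theorem hasDerivAt_integral_param {F : ℝ → ℝ → ℝ} (hF : ContDiff ℝ 1 (Function.uncurry F))
    (a b t : ℝ) :
    HasDerivAt (fun s => ∫ x in a..b, F x s) (∫ x in a..b, pdt F x t) t := by
  have hc : Continuous (Function.uncurry F) := hF.continuous
  have hc' := continuous_pdt hF
  obtain ⟨C, hC⟩ := (isCompact_uIcc (a := a) (b := b)).prod
    (isCompact_Icc (a := t - 1) (b := t + 1)) |>.exists_bound_of_continuousOn hc'.continuousOn
  refine (intervalIntegral.hasDerivAt_integral_of_dominated_loc_of_deriv_le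
    (F := fun s x => F x s) (F' := fun s x => pdt F x s) (s := Icc (t - 1) (t + 1))
    (bound := fun _ => C) (Icc_mem_nhds (by linarith) (by linarith)) ?_ ?_ ?_ ?_ ?_ ?_).2
  · exact Filter.Eventually.of_forall fun s =>
      (hc.comp (by fun_prop : Continuous fun x : ℝ => (x, s))).aestronglyMeasurable
  · exact (hc.comp (by fun_prop : Continuous fun x : ℝ => (x, t))).intervalIntegrable _ _
  · exact (hc'.comp (by fun_prop : Continuous fun x : ℝ => (x, t))).aestronglyMeasurable
  · exact Filter.Eventually.of_forall fun x hx s hs => hC (x, s) ⟨uIoc_subset_uIcc hx, hs⟩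
  · exact intervalIntegrable_const
  · exact Filter.Eventually.of_forall fun x _ s _ => hasDerivAt_pdt hF x s

/-! ### Extension of the equations to the closed interval -/

/-- A continuous function vanishing on the open interval vanishes on its closure. -/
theorem zero_on_Icc {a b : ℝ} (hab : a < b) {f : ℝ → ℝ} (hf : Continuous f)
    (h : ∀ x ∈ Ioo a b, f x = 0) : ∀ x ∈ Icc a b, f x = 0 := by
  intro x hx
  rw [← closure_Ioo hab.ne] at hx
  exact (closure_minimal (t := {x | f x = 0}) h (isClosed_eq hf continuous_const)) hx

theorem pdx_zero_on_Icc {a b : ℝ} (hab : a < b) {G : ℝ → ℝ → ℝ}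
    (hG : ContDiff ℝ (⊤ : ℕ∞) (Function.uncurry G)) {t : ℝ}
    (h : ∀ x ∈ Ioo a b, G x t = 0) : ∀ x ∈ Icc a b, pdx G x t = 0 := by
  refine zero_on_Icc hab ((smooth_pdx hG).continuous.comp
    (by fun_prop : Continuous fun x : ℝ => (x, t))) fun x hx => ?_
  have : (fun y => G y t) =ᶠ[nhds x] fun _ => (0 : ℝ) := by
    filter_upwards [isOpen_Ioo.mem_nhds hx] with y hy using h y hy
  exact this.deriv_eq.trans (deriv_const x 0)

/-- An equation `p_t = ε p_xx + q` valid on the open interval may be differentiated in `x`, and the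
result holds up to the end points, because both sides are continuous there. -/
theorem pde_dx {a b : ℝ} (hab : a < b) {p q : ℝ → ℝ → ℝ}
    (hp : ContDiff ℝ (⊤ : ℕ∞) (Function.uncurry p))
    (hq : ContDiff ℝ (⊤ : ℕ∞) (Function.uncurry q)) {ε t : ℝ}
    (h : ∀ x ∈ Ioo a b, pdt p x t = ε * pdx (pdx p) x t + q x t) :
    ∀ x ∈ Icc a b, pdt (pdx p) x t = ε * pdx (pdx (pdx p)) x t + pdx q x t := by
  have hp1 := smooth_pdt hp
  have hp2 := smooth_pdx (smooth_pdx hp)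
  have hG : ContDiff ℝ (⊤ : ℕ∞)
      (Function.uncurry fun x t => pdt p x t - ε * pdx (pdx p) x t - q x t) :=
    (hp1.sub (contDiff_const.mul hp2)).sub hq
  intro x hx
  have key := pdx_zero_on_Icc hab hG (t := t) (fun x hx => by rw [h x hx]; ring) x hx
  have l : (1 : WithTop ℕ∞) ≤ ((⊤ : ℕ∞) : WithTop ℕ∞) := by exact_mod_cast le_top
  have d := ((hasDerivAt_pdx (hp1.of_le l) x t).sub
    ((hasDerivAt_pdx (hp2.of_le l) x t).const_mul ε)).sub (hasDerivAt_pdx (hq.of_le l) x t)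
  rw [← pdx_pdt_comm hp]
  have e : pdx (fun x t => pdt p x t - ε * pdx (pdx p) x t - q x t) x t = _ := d.deriv
  rw [key] at e
  linarith

/-! ### The norms -/

theorem abs_le_supIcc {a b : ℝ} {f : ℝ → ℝ} (hf : Continuous f) {x : ℝ} (hx : x ∈ Icc a b) :
    |f x| ≤ supIcc a b f :=
  le_csSup (isCompact_Icc.image hf.abs).bddAbove (mem_image_of_mem _ hx)

theorem supIcc_nonneg (a b : ℝ) (f : ℝ → ℝ) : 0 ≤ supIcc a b f := by
  apply Real.sSup_nonneg
  rintro _ ⟨x, _, rfl⟩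
  exact abs_nonneg _

/-- The squared form of the Poincaré inequality contained in the hypothesis on `c₁`. -/
theorem poincare_sq {a b c₁ : ℝ} (hab : a ≤ b) {φ : ℝ → ℝ}
    (h : l2norm a b φ + supIcc a b φ ≤ c₁ * l2norm a b (deriv φ)) :
    ∫ x in a..b, (φ x) ^ 2 ≤ c₁ ^ 2 * ∫ x in a..b, (deriv φ x) ^ 2 := by
  have h0 := supIcc_nonneg a b φ
  have i1 : 0 ≤ ∫ x in a..b, (φ x) ^ 2 :=
    intervalIntegral.integral_nonneg hab fun x _ => sq_nonneg _
  have i2 : 0 ≤ ∫ x in a..b, (deriv φ x) ^ 2 :=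
    intervalIntegral.integral_nonneg hab fun x _ => sq_nonneg _
  have h1 : l2norm a b φ ≤ c₁ * l2norm a b (deriv φ) := by linarith
  have h2 := pow_le_pow_left₀ (Real.sqrt_nonneg _) h1 2
  rw [mul_pow] at h2
  simpa [l2norm, Real.sq_sqrt i1, Real.sq_sqrt i2] using h2

/-! ### The flux identity and pointwise estimates -/

/-- The integrand of the time derivative of the energy equals the remainder plus the `x`-derivative
of a flux. Here `Wi`, `Vi`, `Ui`, `Ti` stand for the `i`-th space derivatives of `w`, `v`, `u`, `Θ`,
`G`, `G1`, `g2` for `γ`, `γ'`, `γ''` evaluated at `Θ`, and `H`, `H1`, `h2` for those of `ĥ`; a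
suffix `t` is a time derivative. Every term of the flux has a factor `W1`, `V3`, `U3` or `T1`, so it
vanishes at the boundary. This single identity contains all integrations by parts. -/
theorem flux_hasDerivAt {W0 W1 Wt V1 V2 V3 U1 U2 U3 U4 T1 G G1 H H1 : ℝ → ℝ}
    {W2 W1t V4 U5 V2t U2t U3t T2 Tt g2 h2 x α ε B : ℝ}
    (dW0 : HasDerivAt W0 (W1 x) x) (dW1 : HasDerivAt W1 W2 x) (dWt : HasDerivAt Wt W1t x)
    (dV1 : HasDerivAt V1 (V2 x) x) (dV2 : HasDerivAt V2 (V3 x) x) (dV3 : HasDerivAt V3 V4 x)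
    (dU1 : HasDerivAt U1 (U2 x) x) (dU2 : HasDerivAt U2 (U3 x) x) (dU3 : HasDerivAt U3 (U4 x) x)
    (dU4 : HasDerivAt U4 U5 x) (dT1 : HasDerivAt T1 T2 x)
    (dG : HasDerivAt G (G1 x * T1 x) x) (dG1 : HasDerivAt G1 (g2 * T1 x) x)
    (dH : HasDerivAt H (H1 x * T1 x) x) (dH1 : HasDerivAt H1 (h2 * T1 x) x)
    (eW : Wt x = ε * W2 + (G1 x * T1 x * V1 x + G x * V2 x)
      + (H1 x * T1 x * U1 x + H x * U2 x) - α * W0 x)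
    (eV : V2t = ε * V4 + W2) (eU2 : U2t = ε * U4 x + V2 x) (eU3 : U3t = ε * U5 + V3 x) :
    HasDerivAt (fun x => W1 x * Wt x - W1 x * (G1 x * T1 x * V1 x) - W1 x * (H1 x * T1 x * U1 x)
        + α * (W1 x * W0 x) + ε * (G x * V2 x * V3 x) + ε * (H x * U3 x * V2 x)
        + ε * (H x * U2 x * V3 x) + B * ε * (U2 x * U3 x) + 2 * ε ^ 2 * (H x * U3 x * U4 x)
        - ε / 2 * (G1 x * T1 x * V2 x ^ 2) - ε * (H1 x * T1 x * U2 x * V2 x)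
        - ε ^ 2 * (H1 x * T1 x * U3 x ^ 2))
      ((W1 x * W1t + (1/2 * (G1 x * Tt) * V2 x ^ 2 + G x * V2 x * V2t)
          + (H1 x * Tt * U2 x * V2 x + H x * U2t * V2 x + H x * U2 x * V2t)
          + B * (U2 x * U2t) + ε * (H1 x * Tt * U3 x ^ 2 + 2 * H x * U3 x * U3t))
        - (-ε * W2 ^ 2 + α * W1 x ^ 2 * (-1)
          + W1 x * ((g2 * T1 x ^ 2 + G1 x * T2) * V1 x + G1 x * T1 x * V2 x)
          + W1 x * ((h2 * T1 x ^ 2 + H1 x * T2) * U1 x + H1 x * T1 x * U2 x)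
          + 1/2 * G1 x * Tt * V2 x ^ 2 - ε * G x * V3 x ^ 2
          + 1/2 * ε * (g2 * T1 x ^ 2 + G1 x * T2) * V2 x ^ 2
          + H1 x * Tt * U2 x * V2 x + H x * V2 x ^ 2
          + ε * (h2 * T1 x ^ 2 + H1 x * T2) * U2 x * V2 x
          - B * ε * U3 x ^ 2 + B * U2 x * V2 x + ε * H1 x * Tt * U3 x ^ 2
          - 2 * ε ^ 2 * H x * U4 x ^ 2
          + ε ^ 2 * (h2 * T1 x ^ 2 + H1 x * T2) * U3 x ^ 2)) x := by
  have D := (((((((((((dW1.mul dWt).sub (dW1.mul ((dG1.mul dT1).mul dV1))).sub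
    (dW1.mul ((dH1.mul dT1).mul dU1))).add ((dW1.mul dW0).const_mul α)).add
    (((dG.mul dV2).mul dV3).const_mul ε)).add (((dH.mul dU3).mul dV2).const_mul ε)).add
    (((dH.mul dU2).mul dV3).const_mul ε)).add ((dU2.mul dU3).const_mul (B * ε))).add
    (((dH.mul dU3).mul dU4).const_mul (2 * ε ^ 2))).sub
    (((dG1.mul dT1).mul (dV2.pow 2)).const_mul (ε / 2))).sub
    ((((dH1.mul dT1).mul dU2).mul dV2).const_mul ε)).sub
    (((dH1.mul dT1).mul (dU3.pow 2)).const_mul (ε ^ 2))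
  refine D.congr_deriv ?_
  simp only [Pi.mul_apply, Pi.pow_apply]
  rw [eW]
  subst eV eU2 eU3
  push_cast
  ring

theorem cross_le {p A x y : ℝ} (hp : |p| ≤ A) : p * x * y ≤ A * (x ^ 2 + y ^ 2) := by
  obtain ⟨h1, h2⟩ := abs_le.1 hp
  nlinarith [sq_nonneg (x + y), sq_nonneg (x - y), sq_nonneg x, sq_nonneg y]

theorem abs_mul_le_of {p q P Q : ℝ} (hp : |p| ≤ P) (hq : |q| ≤ Q) : |p * q| ≤ P * Q := by
  rw [abs_mul]
  exact mul_le_mul hp hq (abs_nonneg _) ((abs_nonneg _).trans hp)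

/-- The pointwise bound on the remainder. All coefficients except those of the nonpositive terms are
at most a fixed constant times `1 + K`, where `K` bounds `|Θ_xx|` and `Θ_x²`; the term
`-ε γ v_xxx²` absorbs `k₁ ε v_xxx²` entirely. -/
theorem remainder_le {W1 W2 V1 V2 V3 U1 U2 U3 U4 T1 T2 Tt G G1 H H1 g2 h2 α ε B : ℝ}
    {k₁ k₄ k₆ k₇ k₈ k₉ M K : ℝ} (hα : 0 ≤ α) (hε : 0 < ε) (hε1 : ε < 1) (hB : 0 ≤ B)
    (hM : 0 ≤ M) (hK : 0 ≤ K) (hH0 : 0 ≤ H)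
    (hG : k₁ ≤ G) (hH : H ≤ k₄) (hG1 : |G1| ≤ k₆) (hH1 : |H1| ≤ k₇) (hg2 : |g2| ≤ k₈)
    (hh2 : |h2| ≤ k₉) (hTt : |Tt| ≤ M) (hT2 : |T2| ≤ K) (hT1 : T1 ^ 2 ≤ K) :
    (-ε * W2 ^ 2 + α * W1 ^ 2 * (-1)
          + W1 * ((g2 * T1 ^ 2 + G1 * T2) * V1 + G1 * T1 * V2)
          + W1 * ((h2 * T1 ^ 2 + H1 * T2) * U1 + H1 * T1 * U2)
          + 1/2 * G1 * Tt * V2 ^ 2 - ε * G * V3 ^ 2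
          + 1/2 * ε * (g2 * T1 ^ 2 + G1 * T2) * V2 ^ 2
          + H1 * Tt * U2 * V2 + H * V2 ^ 2
          + ε * (h2 * T1 ^ 2 + H1 * T2) * U2 * V2
          - B * ε * U3 ^ 2 + B * U2 * V2 + ε * H1 * Tt * U3 ^ 2
          - 2 * ε ^ 2 * H * U4 ^ 2
          + ε ^ 2 * (h2 * T1 ^ 2 + H1 * T2) * U3 ^ 2) + k₁ * ε * V3 ^ 2
      ≤ 10 * ((k₆ + k₇ + k₈ + k₉ + k₆ * M + k₇ * M + k₄ + B) * (1 + K)) *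
        (W1 ^ 2 + V2 ^ 2 + U2 ^ 2 + ε * U3 ^ 2 + (V1 ^ 2 + U1 ^ 2)) := by
  have h6 : 0 ≤ k₆ := (abs_nonneg _).trans hG1
  have h7 : 0 ≤ k₇ := (abs_nonneg _).trans hH1
  have h8 : 0 ≤ k₈ := (abs_nonneg _).trans hg2
  have h9 : 0 ≤ k₉ := (abs_nonneg _).trans hh2
  have h4 : 0 ≤ k₄ := hH0.trans hH
  set S := k₆ + k₇ + k₈ + k₉ + k₆ * M + k₇ * M + k₄ + B with hS
  have m6 : 0 ≤ k₆ * M := by positivity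
  have m7 : 0 ≤ k₇ * M := by positivity
  set L := S * (1 + K) with hL
  have aT1 : |T1| ≤ 1 + K := by
    rw [abs_le]; constructor <;> nlinarith [sq_nonneg (T1 - 1), sq_nonneg (T1 + 1)]
  have aT1s : |T1 ^ 2| ≤ 1 + K := by rw [abs_of_nonneg (sq_nonneg _)]; linarith
  have aT2 : |T2| ≤ 1 + K := by linarith
  have K1 : 0 ≤ 1 + K := by linarith
  have up : ∀ s, s ≤ S → s * (1 + K) ≤ L := fun s hs => mul_le_mul_of_nonneg_right hs K1
  have S0 : 0 ≤ S := by positivity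
  have SL : S ≤ L := by nlinarith
  have L0 : 0 ≤ L := S0.trans SL
  have b1 : |g2 * T1 ^ 2 + G1 * T2| ≤ L := by
    have := abs_add_le (g2 * T1 ^ 2) (G1 * T2)
    have := abs_mul_le_of hg2 aT1s
    have := abs_mul_le_of hG1 aT2
    have := up (k₈ + k₆) (by linarith)
    linarith
  have b2 : |h2 * T1 ^ 2 + H1 * T2| ≤ L := by
    have := abs_add_le (h2 * T1 ^ 2) (H1 * T2)
    have := abs_mul_le_of hh2 aT1s
    have := abs_mul_le_of hH1 aT2
    have := up (k₉ + k₇) (by linarith)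
    linarith
  have b3 : |G1 * T1| ≤ L := (abs_mul_le_of hG1 aT1).trans (up _ (by linarith))
  have b4 : |H1 * T1| ≤ L := (abs_mul_le_of hH1 aT1).trans (up _ (by linarith))
  have b5 : |G1 * Tt| ≤ L := (abs_mul_le_of hG1 hTt).trans (by linarith)
  have b6 : |H1 * Tt| ≤ L := (abs_mul_le_of hH1 hTt).trans (by linarith)
  have b7 : |B| ≤ L := by rw [abs_of_nonneg hB]; linarith
  have ea : |ε| ≤ 1 := by rw [abs_of_pos hε]; exact hε1.le
  have b8 : |ε * (h2 * T1 ^ 2 + H1 * T2)| ≤ L := by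
    simpa using abs_mul_le_of ea b2
  have b9 : ε * (g2 * T1 ^ 2 + G1 * T2) ≤ L := by
    simpa using (le_abs_self _).trans (abs_mul_le_of ea b1)
  have c1 := cross_le (x := W1) (y := V1) b1
  have c2 := cross_le (x := W1) (y := V2) b3
  have c3 := cross_le (x := W1) (y := U1) b2
  have c4 := cross_le (x := W1) (y := U2) b4
  have c5 := mul_le_mul_of_nonneg_right ((le_abs_self _).trans b5) (sq_nonneg V2)
  have c6 := mul_le_mul_of_nonneg_right b9 (sq_nonneg V2)
  have c7 := cross_le (x := U2) (y := V2) b6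
  have c8 := mul_le_mul_of_nonneg_right (hH.trans (by linarith : k₄ ≤ L)) (sq_nonneg V2)
  have c9 := cross_le (x := U2) (y := V2) b8
  have c10 := cross_le (x := U2) (y := V2) b7
  have e3 : 0 ≤ ε * U3 ^ 2 := by positivity
  have c11 := mul_le_mul_of_nonneg_right ((le_abs_self _).trans b6) e3
  have c12 := mul_le_mul_of_nonneg_right ((le_abs_self _).trans b8) e3
  have n1 : 0 ≤ ε * W2 ^ 2 := by positivity
  have n2 : 0 ≤ α * W1 ^ 2 := by positivity
  have n3 : 0 ≤ (G - k₁) * (ε * V3 ^ 2) := mul_nonneg (by linarith) (by positivity)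
  have n4 : 0 ≤ B * (ε * U3 ^ 2) := by positivity
  have n5 : 0 ≤ ε ^ 2 * H * U4 ^ 2 := by positivity
  have p1 := mul_nonneg L0 (sq_nonneg W1)
  have p2 := mul_nonneg L0 (sq_nonneg V2)
  have p3 := mul_nonneg L0 (sq_nonneg U2)
  have p4 := mul_nonneg L0 e3
  have p5 := mul_nonneg L0 (sq_nonneg V1)
  have p6 := mul_nonneg L0 (sq_nonneg U1)
  linarith

/-- Coercivity of the energy density: since `|ĥ u_xx v_xx| ≤ k₁/4 v_xx² + k₄²/k₁ u_xx²`, the choice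
`B = 4 k₄²/k₁` leaves a positive definite form in `v_xx` and `u_xx`. -/
theorem energy_density_ge {W1 V2 U2 U3 G H k₁ k₃ k₄ ε : ℝ} (hk₁ : 0 < k₁) (hk₃ : 0 < k₃)
    (hk₄ : 0 < k₄) (hε : 0 < ε) (hG : k₁ ≤ G) (hH : k₃ ≤ H) (hH4 : H ≤ k₄) :
    W1 ^ 2 + V2 ^ 2 + U2 ^ 2 + ε * U3 ^ 2 ≤ (2 + 4 / k₁ + k₁ / k₄ ^ 2 + 1 / k₃) *
      (1/2 * W1 ^ 2 + 1/2 * (G * V2 ^ 2) + H * U2 * V2 + (4 * k₄ ^ 2 / k₁) / 2 * U2 ^ 2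
        + ε * (H * U3 ^ 2)) := by
  set e := 1/2 * W1 ^ 2 + 1/2 * (G * V2 ^ 2) + H * U2 * V2 + (4 * k₄ ^ 2 / k₁) / 2 * U2 ^ 2
        + ε * (H * U3 ^ 2) with he
  have h1 : 1/2 * W1 ^ 2 + k₁ / 4 * V2 ^ 2 + k₄ ^ 2 / k₁ * U2 ^ 2 + k₃ * (ε * U3 ^ 2) ≤ e := by
    have a1 : 0 ≤ (G - k₁) * V2 ^ 2 := mul_nonneg (by linarith) (sq_nonneg _)
    have a2 : 0 ≤ (H - k₃) * (ε * U3 ^ 2) := mul_nonneg (by linarith) (by positivity)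
    have a3 : -(k₁ / 4 * V2 ^ 2 + k₄ ^ 2 / k₁ * U2 ^ 2) ≤ H * U2 * V2 := by
      have : 0 ≤ (k₁ / 2 * V2 + H * U2) ^ 2 / k₁ := by positivity
      have e1 : (k₁ / 2 * V2 + H * U2) ^ 2 / k₁
          = k₁ / 4 * V2 ^ 2 + H * U2 * V2 + H ^ 2 / k₁ * U2 ^ 2 := by
        field_simp; ring
      have : H ^ 2 / k₁ * U2 ^ 2 ≤ k₄ ^ 2 / k₁ * U2 ^ 2 := by
        have : 0 ≤ H := hk₃.le.trans hH
        gcongr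
      linarith
    have e2 : (4 * k₄ ^ 2 / k₁) / 2 * U2 ^ 2 = 2 * (k₄ ^ 2 / k₁ * U2 ^ 2) := by ring
    rw [he, e2]
    linarith
  have q1 : 0 ≤ 1/2 * W1 ^ 2 := by positivity
  have q2 : 0 ≤ k₁ / 4 * V2 ^ 2 := by positivity
  have q3 : 0 ≤ k₄ ^ 2 / k₁ * U2 ^ 2 := by positivity
  have q4 : 0 ≤ k₃ * (ε * U3 ^ 2) := by positivity
  have r1 : W1 ^ 2 ≤ 2 * e := by linarith
  have r2 : V2 ^ 2 ≤ 4 / k₁ * e := by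
    calc V2 ^ 2 = 4 / k₁ * (k₁ / 4 * V2 ^ 2) := by field_simp
      _ ≤ _ := by gcongr; linarith
  have r3 : U2 ^ 2 ≤ k₁ / k₄ ^ 2 * e := by
    calc U2 ^ 2 = k₁ / k₄ ^ 2 * (k₄ ^ 2 / k₁ * U2 ^ 2) := by field_simp
      _ ≤ _ := by gcongr; linarith
  have r4 : ε * U3 ^ 2 ≤ 1 / k₃ * e := by
    calc ε * U3 ^ 2 = 1 / k₃ * (k₃ * (ε * U3 ^ 2)) := by field_simp
      _ ≤ _ := by gcongr; linarith
  linarith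

/-! ### The energy inequality -/

set_option maxHeartbeats 2000000 in
/-- Differential inequality `y' + k₁ ε ∫ v_xxx² ≤ k₁₃ (y² + y)` for the energy
functional of the ε-regularized system (Lemma 3.7 of the paper). -/
theorem eps_energy_inequality (a b D α : ℝ) (hab : a < b) (hD : 0 < D) (hα : 0 ≤ α)
    (k₁ k₂ k₃ k₄ k₆ k₇ k₈ k₉ M c₁ c₂ : ℝ)
    (hk₁ : 0 < k₁) (hk₂ : 0 < k₂) (hk₃ : 0 < k₃) (hk₄ : 0 < k₄)
    (hk₆ : 0 ≤ k₆) (hk₇ : 0 ≤ k₇) (hk₈ : 0 ≤ k₈) (hk₉ : 0 ≤ k₉)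
    (hM : 0 < M) (hc₁ : 0 < c₁) (hc₂ : 0 < c₂)
    (hc₁prop : ∀ φ : ℝ → ℝ, ContDiff ℝ 1 φ → φ a = 0 → φ b = 0 →
      l2norm a b φ + supIcc a b φ ≤ c₁ * l2norm a b (deriv φ)) :
    ∃ k₁₃ : ℝ, 0 < k₁₃ ∧
      ∀ (ε T : ℝ) (γ hγ Γ : ℝ → ℝ) (w v u Θ : ℝ → ℝ → ℝ) (y : ℝ → ℝ),
        ε ∈ Ioo (0:ℝ) 1 → 0 < T →
        ContDiff ℝ 2 γ → ContDiff ℝ 2 hγ → ContDiff ℝ 1 Γ →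
        IsEpsSolution a b D α ε T γ hγ Γ w v u Θ →
        (∀ x ∈ Icc a b, ∀ t ∈ Ioo (0:ℝ) T,
          k₁ ≤ γ (Θ x t) ∧ γ (Θ x t) ≤ k₂ ∧
          k₃ ≤ hγ (Θ x t) ∧ hγ (Θ x t) ≤ k₄ ∧
          |deriv γ (Θ x t)| ≤ k₆ ∧ |deriv hγ (Θ x t)| ≤ k₇ ∧
          |deriv (deriv γ) (Θ x t)| ≤ k₈ ∧ |deriv (deriv hγ) (Θ x t)| ≤ k₉ ∧
          |pdt Θ x t| ≤ M) →
        (y = fun t =>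
          (1/2 : ℝ) * (∫ x in a..b, (pdx w x t) ^ 2)
          + (1/2 : ℝ) * (∫ x in a..b, γ (Θ x t) * (pdx (pdx v) x t) ^ 2)
          + (∫ x in a..b, hγ (Θ x t) * pdx (pdx u) x t * pdx (pdx v) x t)
          + ((4 * k₄ ^ 2 / k₁) / 2) * (∫ x in a..b, (pdx (pdx u) x t) ^ 2)
          + ε * (∫ x in a..b, hγ (Θ x t) * (pdx (pdx (pdx u)) x t) ^ 2)) →
        (∀ t ∈ Ioo (0:ℝ) T,
          supIcc a b (fun x => pdx (pdx Θ) x t)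
            + (supIcc a b (fun x => pdx Θ x t)) ^ 2 ≤ c₂ * (y t + 1)) →
        ∀ t ∈ Ioo (0:ℝ) T, ∃ y' : ℝ,
          HasDerivAt y y' t ∧
          y' + k₁ * ε * (∫ x in a..b, (pdx (pdx (pdx v)) x t) ^ 2)
            ≤ k₁₃ * ((y t) ^ 2 + y t) := by
  have hB : (0:ℝ) ≤ 4 * k₄ ^ 2 / k₁ := by positivity
  refine ⟨10 * (k₆ + k₇ + k₈ + k₉ + k₆ * M + k₇ * M + k₄ + 4 * k₄ ^ 2 / k₁) * (1 + c₂)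
    * (1 + c₁ ^ 2) * (2 + 4 / k₁ + k₁ / k₄ ^ 2 + 1 / k₃), by positivity, ?_⟩
  intro ε T γ hγ Γ w v u Θ y hε hT sγ shγ _ hsol hbd hy hsup t ht
  obtain ⟨sw, sv, su, sΘ, ew, ev, eu, -, hbc⟩ := hsol
  obtain ⟨hε0, hε1⟩ := hε
  have l : (1 : WithTop ℕ∞) ≤ ((⊤ : ℕ∞) : WithTop ℕ∞) := by exact_mod_cast le_top
  have sw1 := smooth_pdx sw
  have sw2 := smooth_pdx sw1
  have swt := smooth_pdt sw
  have sv1 := smooth_pdx sv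
  have sv2 := smooth_pdx sv1
  have sv3 := smooth_pdx sv2
  have sv4 := smooth_pdx sv3
  have su1 := smooth_pdx su
  have su2 := smooth_pdx su1
  have su3 := smooth_pdx su2
  have su4 := smooth_pdx su3
  have su5 := smooth_pdx su4
  have sΘ1 := smooth_pdx sΘ
  have sΘ2 := smooth_pdx sΘ1
  have sΘt := smooth_pdt sΘ
  have dγ : Differentiable ℝ γ := sγ.differentiable two_ne_zero
  have dh : Differentiable ℝ hγ := shγ.differentiable two_ne_zero
  have sγ' : ContDiff ℝ 1 (deriv γ) := by
    have h : ContDiff ℝ (1 + 1) γ := by simpa [one_add_one_eq_two] using sγ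
    exact (contDiff_succ_iff_deriv.1 h).2.2
  have shγ' : ContDiff ℝ 1 (deriv hγ) := by
    have h : ContDiff ℝ (1 + 1) hγ := by simpa [one_add_one_eq_two] using shγ
    exact (contDiff_succ_iff_deriv.1 h).2.2
  have dγ' : Differentiable ℝ (deriv γ) := sγ'.differentiable one_ne_zero
  have dh' : Differentiable ℝ (deriv hγ) := shγ'.differentiable one_ne_zero
  have cγ'' : Continuous (deriv (deriv γ)) := sγ'.continuous_deriv le_rfl
  have ch'' : Continuous (deriv (deriv hγ)) := shγ'.continuous_deriv le_rfl
  -- continuity of a jointly continuous function on the time slice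
  have slice : ∀ {f : ℝ → ℝ → ℝ}, ContDiff ℝ (⊤ : ℕ∞) (Function.uncurry f) →
      ∀ s, Continuous fun x => f x s := fun hf s =>
    hf.continuous.comp (by fun_prop : Continuous fun x : ℝ => (x, s))
  have ΘX : ∀ x s, HasDerivAt (fun y => Θ y s) (pdx Θ x s) x := hasDerivAt_pdx (sΘ.of_le l)
  have ΘT : ∀ x s, HasDerivAt (fun r => Θ x r) (pdt Θ x s) s := hasDerivAt_pdt (sΘ.of_le l)
  have dx : ∀ {f : ℝ → ℝ → ℝ}, ContDiff ℝ (⊤ : ℕ∞) (Function.uncurry f) →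
      ∀ x, HasDerivAt (fun y => f y t) (pdx f x t) x := fun hf x =>
    hasDerivAt_pdx (hf.of_le l) x t
  have cmp : ∀ {g : ℝ → ℝ}, Differentiable ℝ g → ∀ x,
      HasDerivAt (fun y => g (Θ y t)) (deriv g (Θ x t) * pdx Θ x t) x := fun hg x =>
    (hg _).hasDerivAt.comp x (ΘX x t)
  -- the equations, differentiated in `x` and extended to the closed interval
  have eV : ∀ s ∈ Ioo (0:ℝ) T, ∀ x ∈ Icc a b, pdt (pdx v) x s =
      ε * pdx (pdx (pdx v)) x s + pdx w x s := fun s hs =>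
    pde_dx hab sv sw fun x hx => ev x hx s hs
  have eU : ∀ s ∈ Ioo (0:ℝ) T, ∀ x ∈ Icc a b, pdt (pdx u) x s =
      ε * pdx (pdx (pdx u)) x s + pdx v x s := fun s hs =>
    pde_dx hab su sv fun x hx => eu x hx s hs
  have eV2 : ∀ x ∈ Icc a b, pdt (pdx (pdx v)) x t =
      ε * pdx (pdx (pdx (pdx v))) x t + pdx (pdx w) x t :=
    pde_dx hab sv1 sw1 fun x hx => eV t ht x (Ioo_subset_Icc_self hx)
  have eU2 : ∀ x ∈ Icc a b, pdt (pdx (pdx u)) x t =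
      ε * pdx (pdx (pdx (pdx u))) x t + pdx (pdx v) x t :=
    pde_dx hab su1 sv1 fun x hx => eU t ht x (Ioo_subset_Icc_self hx)
  have eU3 : ∀ x ∈ Icc a b, pdt (pdx (pdx (pdx u))) x t =
      ε * pdx (pdx (pdx (pdx (pdx u)))) x t + pdx (pdx (pdx v)) x t :=
    pde_dx hab su2 sv2 fun x hx => eU2 x (Ioo_subset_Icc_self hx)
  have eW : ∀ x ∈ Icc a b, pdt w x t = ε * pdx (pdx w) x t
      + (deriv γ (Θ x t) * pdx Θ x t * pdx v x t + γ (Θ x t) * pdx (pdx v) x t)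
      + (deriv hγ (Θ x t) * pdx Θ x t * pdx u x t + hγ (Θ x t) * pdx (pdx u) x t)
      - α * w x t := by
    have c1 := slice swt t
    have c2 := slice sw2 t
    have c3 := slice sw t
    have c4 := slice sΘ t
    have c5 := slice sΘ1 t
    have c6 := slice sv1 t
    have c7 := slice sv2 t
    have c8 := slice su1 t
    have c9 := slice su2 t
    have c10 := sγ.continuous.comp c4
    have c11 := shγ.continuous.comp c4
    have c12 := sγ'.continuous.comp c4
    have c13 := shγ'.continuous.comp c4
    have z := zero_on_Icc hab (f := fun x => pdt w x t - (ε * pdx (pdx w) x t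
      + (deriv γ (Θ x t) * pdx Θ x t * pdx v x t + γ (Θ x t) * pdx (pdx v) x t)
      + (deriv hγ (Θ x t) * pdx Θ x t * pdx u x t + hγ (Θ x t) * pdx (pdx u) x t)
      - α * w x t))
      (c1.sub ((((continuous_const.mul c2).add (((c12.mul c5).mul c6).add (c10.mul c7))).add
        (((c13.mul c5).mul c8).add (c11.mul c9))).sub (continuous_const.mul c3)))
      (fun x hx => by
        have f1 : pdx (fun y s => γ (Θ y s) * pdx v y s) x t =
          deriv γ (Θ x t) * pdx Θ x t * pdx v x t + γ (Θ x t) * pdx (pdx v) x t :=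
          ((cmp dγ x).mul (dx sv1 x)).deriv
        have f2 : pdx (fun y s => hγ (Θ y s) * pdx u y s) x t =
          deriv hγ (Θ x t) * pdx Θ x t * pdx u x t + hγ (Θ x t) * pdx (pdx u) x t :=
          ((cmp dh x).mul (dx su1 x)).deriv
        rw [ew x hx t ht, f1, f2]
        ring)
    intro x hx
    linarith [z x hx]
  -- the Neumann conditions persist in time, hence `v_xxx = u_xxx = 0` at the end points
  have bdt : ∀ {f : ℝ → ℝ → ℝ} {x : ℝ}, (∀ s ∈ Ioo (0:ℝ) T, f x s = 0) → pdt f x t = 0 := by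
    intro f x h
    have : (fun s => f x s) =ᶠ[nhds t] fun _ => (0 : ℝ) := by
      filter_upwards [isOpen_Ioo.mem_nhds ht] with s hs using h s hs
    exact this.deriv_eq.trans (deriv_const t 0)
  have third : ∀ {f q : ℝ → ℝ → ℝ} {x : ℝ}, (∀ s ∈ Ioo (0:ℝ) T, pdx f x s = 0) →
      pdt (pdx f) x t = ε * pdx (pdx (pdx f)) x t + pdx q x t → pdx q x t = 0 →
      pdx (pdx (pdx f)) x t = 0 := by
    intro f q x h e hq
    rw [bdt h, hq, add_zero] at e
    exact (mul_eq_zero.1 e.symm).resolve_left hε0.ne'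
  have ha : a ∈ Icc a b := left_mem_Icc.2 hab.le
  have hb : b ∈ Icc a b := right_mem_Icc.2 hab.le
  obtain ⟨wa, wb, va, vb, ua, ub, Θa, Θb⟩ := hbc t ht
  have v3a := third (fun s hs => (hbc s hs).2.2.1) (eV t ht a ha) wa
  have v3b := third (fun s hs => (hbc s hs).2.2.2.1) (eV t ht b hb) wb
  have u3a := third (fun s hs => (hbc s hs).2.2.2.2.1) (eU t ht a ha) va
  have u3b := third (fun s hs => (hbc s hs).2.2.2.2.2.1) (eU t ht b hb) vb
  -- the energy density
  set F : ℝ → ℝ → ℝ := fun x s => 1/2 * (pdx w x s) ^ 2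
    + 1/2 * (γ (Θ x s) * (pdx (pdx v) x s) ^ 2)
    + hγ (Θ x s) * pdx (pdx u) x s * pdx (pdx v) x s
    + (4 * k₄ ^ 2 / k₁) / 2 * (pdx (pdx u) x s) ^ 2
    + ε * (hγ (Θ x s) * (pdx (pdx (pdx u)) x s) ^ 2) with hFdef
  have sF : ContDiff ℝ 1 (Function.uncurry F) := by
    have g1 : ContDiff ℝ 1 (fun p : ℝ × ℝ => γ (Function.uncurry Θ p)) :=
      (sγ.of_le one_le_two).comp (sΘ.of_le l)
    have g2 : ContDiff ℝ 1 (fun p : ℝ × ℝ => hγ (Function.uncurry Θ p)) :=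
      (shγ.of_le one_le_two).comp (sΘ.of_le l)
    exact ((((contDiff_const.mul ((sw1.of_le l).pow 2)).add
      (contDiff_const.mul (g1.mul ((sv2.of_le l).pow 2)))).add
      ((g2.mul (su2.of_le l)).mul (sv2.of_le l))).add
      (contDiff_const.mul ((su2.of_le l).pow 2))).add
      (contDiff_const.mul (g2.mul ((su3.of_le l).pow 2)))
  have hyF : y = fun s => ∫ x in a..b, F x s := by
    rw [hy]
    funext s
    have c4 := slice sΘ s
    have c10 : Continuous fun x => γ (Θ x s) := sγ.continuous.comp c4
    have c11 : Continuous fun x => hγ (Θ x s) := shγ.continuous.comp c4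
    have c1 := slice sw1 s
    have c7 := slice sv2 s
    have c9 := slice su2 s
    have c8 := slice su3 s
    have i1 : IntervalIntegrable (fun x => 1/2 * (pdx w x s) ^ 2) volume a b :=
      (continuous_const.mul (c1.pow 2)).intervalIntegrable _ _
    have i2 : IntervalIntegrable (fun x => 1/2 * (γ (Θ x s) * (pdx (pdx v) x s) ^ 2))
      volume a b := (continuous_const.mul (c10.mul (c7.pow 2))).intervalIntegrable _ _
    have i3 : IntervalIntegrable (fun x => hγ (Θ x s) * pdx (pdx u) x s * pdx (pdx v) x s)
      volume a b := ((c11.mul c9).mul c7).intervalIntegrable _ _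
    have i4 : IntervalIntegrable (fun x => (4 * k₄ ^ 2 / k₁) / 2 * (pdx (pdx u) x s) ^ 2)
      volume a b := (continuous_const.mul (c9.pow 2)).intervalIntegrable _ _
    have i5 : IntervalIntegrable (fun x => ε * (hγ (Θ x s) * (pdx (pdx (pdx u)) x s) ^ 2))
      volume a b := (continuous_const.mul (c11.mul (c8.pow 2))).intervalIntegrable _ _
    simp only [hFdef]
    rw [intervalIntegral.integral_add (((i1.add i2).add i3).add i4) i5,
      intervalIntegral.integral_add ((i1.add i2).add i3) i4,
      intervalIntegral.integral_add (i1.add i2) i3, intervalIntegral.integral_add i1 i2]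
    simp only [intervalIntegral.integral_const_mul]
  have hFt : ∀ x, pdt F x t = pdx w x t * pdt (pdx w) x t
      + (1/2 * (deriv γ (Θ x t) * pdt Θ x t) * pdx (pdx v) x t ^ 2
        + γ (Θ x t) * pdx (pdx v) x t * pdt (pdx (pdx v)) x t)
      + (deriv hγ (Θ x t) * pdt Θ x t * pdx (pdx u) x t * pdx (pdx v) x t
        + hγ (Θ x t) * pdt (pdx (pdx u)) x t * pdx (pdx v) x t
        + hγ (Θ x t) * pdx (pdx u) x t * pdt (pdx (pdx v)) x t)
      + (4 * k₄ ^ 2 / k₁) * (pdx (pdx u) x t * pdt (pdx (pdx u)) x t)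
      + ε * (deriv hγ (Θ x t) * pdt Θ x t * pdx (pdx (pdx u)) x t ^ 2
        + 2 * hγ (Θ x t) * pdx (pdx (pdx u)) x t * pdt (pdx (pdx (pdx u))) x t) := by
    intro x
    have t1 := hasDerivAt_pdt (sw1.of_le l) x t
    have t2 := hasDerivAt_pdt (sv2.of_le l) x t
    have t3 := hasDerivAt_pdt (su2.of_le l) x t
    have t4 := hasDerivAt_pdt (su3.of_le l) x t
    have t5 := (dγ _).hasDerivAt.comp t (ΘT x t)
    have t6 := (dh _).hasDerivAt.comp t (ΘT x t)
    have e : pdt F x t = _ := (((((t1.pow 2).const_mul (1/2)).add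
      ((t5.mul (t2.pow 2)).const_mul (1/2))).add ((t6.mul t3).mul t2)).add
      ((t3.pow 2).const_mul ((4 * k₄ ^ 2 / k₁) / 2))).add
      ((t6.mul (t4.pow 2)).const_mul ε) |>.deriv
    rw [e]
    simp only [Pi.mul_apply, Pi.pow_apply, Function.comp_apply]
    push_cast
    ring
  have hder : HasDerivAt y (∫ x in a..b, pdt F x t) t := by
    rw [hyF]
    exact hasDerivAt_integral_param sF a b t
  -- the integrand that remains after all integrations by parts
  set R : ℝ → ℝ := fun x => -ε * pdx (pdx w) x t ^ 2 + α * pdx w x t ^ 2 * (-1)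
    + pdx w x t * ((deriv (deriv γ) (Θ x t) * pdx Θ x t ^ 2
        + deriv γ (Θ x t) * pdx (pdx Θ) x t) * pdx v x t
        + deriv γ (Θ x t) * pdx Θ x t * pdx (pdx v) x t)
    + pdx w x t * ((deriv (deriv hγ) (Θ x t) * pdx Θ x t ^ 2
        + deriv hγ (Θ x t) * pdx (pdx Θ) x t) * pdx u x t
        + deriv hγ (Θ x t) * pdx Θ x t * pdx (pdx u) x t)
    + 1/2 * deriv γ (Θ x t) * pdt Θ x t * pdx (pdx v) x t ^ 2
    - ε * γ (Θ x t) * pdx (pdx (pdx v)) x t ^ 2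
    + 1/2 * ε * (deriv (deriv γ) (Θ x t) * pdx Θ x t ^ 2
        + deriv γ (Θ x t) * pdx (pdx Θ) x t) * pdx (pdx v) x t ^ 2
    + deriv hγ (Θ x t) * pdt Θ x t * pdx (pdx u) x t * pdx (pdx v) x t
    + hγ (Θ x t) * pdx (pdx v) x t ^ 2
    + ε * (deriv (deriv hγ) (Θ x t) * pdx Θ x t ^ 2
        + deriv hγ (Θ x t) * pdx (pdx Θ) x t) * pdx (pdx u) x t * pdx (pdx v) x t
    - (4 * k₄ ^ 2 / k₁) * ε * pdx (pdx (pdx u)) x t ^ 2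
    + (4 * k₄ ^ 2 / k₁) * pdx (pdx u) x t * pdx (pdx v) x t
    + ε * deriv hγ (Θ x t) * pdt Θ x t * pdx (pdx (pdx u)) x t ^ 2
    - 2 * ε ^ 2 * hγ (Θ x t) * pdx (pdx (pdx (pdx u))) x t ^ 2
    + ε ^ 2 * (deriv (deriv hγ) (Θ x t) * pdx Θ x t ^ 2
        + deriv hγ (Θ x t) * pdx (pdx Θ) x t) * pdx (pdx (pdx u)) x t ^ 2 with hR
  have z1 := slice sw1 t
  have z2 := slice sw2 t
  have z3 := slice sv1 t
  have z4 := slice sv2 t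
  have z5 := slice sv3 t
  have z6 := slice su1 t
  have z7 := slice su2 t
  have z8 := slice su3 t
  have z9 := slice su4 t
  have z10 := slice sΘ t
  have z11 := slice sΘ1 t
  have z12 := slice sΘ2 t
  have z13 := slice sΘt t
  have z14 : Continuous fun x => γ (Θ x t) := sγ.continuous.comp z10
  have z15 : Continuous fun x => hγ (Θ x t) := shγ.continuous.comp z10
  have z16 : Continuous fun x => deriv γ (Θ x t) := sγ'.continuous.comp z10
  have z17 : Continuous fun x => deriv hγ (Θ x t) := shγ'.continuous.comp z10
  have z18 : Continuous fun x => deriv (deriv γ) (Θ x t) := cγ''.comp z10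
  have z19 : Continuous fun x => deriv (deriv hγ) (Θ x t) := ch''.comp z10
  have cR : Continuous R := by
    rw [hR]
    fun_prop
  have cFt : Continuous fun x => pdt F x t :=
    (continuous_pdt sF).comp (by fun_prop : Continuous fun x : ℝ => (x, t))
  have cF : Continuous fun x => F x t :=
    sF.continuous.comp (by fun_prop : Continuous fun x : ℝ => (x, t))
  have hFR : ∫ x in a..b, pdt F x t = ∫ x in a..b, R x := by
    have ftc := intervalIntegral.integral_eq_sub_of_hasDerivAt (a := a) (b := b)
      (f' := fun x => pdt F x t - R x)
      (fun x hx => by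
        rw [uIcc_of_le hab.le] at hx
        rw [hFt x, hR]
        refine flux_hasDerivAt (W0 := fun x => w x t) (W1 := fun x => pdx w x t)
          (Wt := fun x => pdt w x t) (dx sw x) (dx sw1 x) ?_ (dx sv1 x)
          (dx sv2 x) (dx sv3 x) (dx su1 x) (dx su2 x) (dx su3 x) (dx su4 x) (dx sΘ1 x)
          (cmp dγ x) (cmp dγ' x) (cmp dh x) (cmp dh' x) (eW x hx) (eV2 x hx) (eU2 x hx)
          (eU3 x hx)
        rw [← pdx_pdt_comm sw]
        exact dx swt x)
      ((cFt.sub cR).intervalIntegrable _ _)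
    rw [intervalIntegral.integral_sub (cFt.intervalIntegrable _ _)
      (cR.intervalIntegrable _ _)] at ftc
    simp only [wa, wb, v3a, v3b, u3a, u3b, Θa, Θb] at ftc
    linarith
  refine ⟨_, hder, ?_⟩
  -- the energy controls the quadratic form `E`
  have hE : ∫ x in a..b, (pdx w x t ^ 2 + pdx (pdx v) x t ^ 2 + pdx (pdx u) x t ^ 2
      + ε * pdx (pdx (pdx u)) x t ^ 2) ≤ (2 + 4 / k₁ + k₁ / k₄ ^ 2 + 1 / k₃) * y t := by
    rw [hyF, ← intervalIntegral.integral_const_mul]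
    refine intervalIntegral.integral_mono_on hab.le
      (Continuous.intervalIntegrable (by fun_prop) _ _)
      ((continuous_const.mul cF).intervalIntegrable _ _) fun x hx => ?_
    obtain ⟨b1, b2, b3, b4, -⟩ := hbd x hx t ht
    exact energy_density_ge hk₁ hk₃ hk₄ hε0 b1 b3 b4
  have hE0 : 0 ≤ ∫ x in a..b, (pdx w x t ^ 2 + pdx (pdx v) x t ^ 2 + pdx (pdx u) x t ^ 2
      + ε * pdx (pdx (pdx u)) x t ^ 2) :=
    intervalIntegral.integral_nonneg hab.le fun x _ => by positivity
  have hC2 : 0 < 2 + 4 / k₁ + k₁ / k₄ ^ 2 + 1 / k₃ := by positivity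
  have hY : 0 ≤ y t := nonneg_of_mul_nonneg_right (hE0.trans hE) hC2
  have iVV : ∫ x in a..b, pdx (pdx v) x t ^ 2 ≤ ∫ x in a..b, (pdx w x t ^ 2
      + pdx (pdx v) x t ^ 2 + pdx (pdx u) x t ^ 2 + ε * pdx (pdx (pdx u)) x t ^ 2
      - pdx (pdx u) x t ^ 2) := by
    refine intervalIntegral.integral_mono_on hab.le
      (Continuous.intervalIntegrable (by fun_prop) _ _)
      (Continuous.intervalIntegrable (by fun_prop) _ _) fun x hx => ?_
    have : 0 ≤ ε * pdx (pdx (pdx u)) x t ^ 2 := by positivity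
    linarith [sq_nonneg (pdx w x t)]
  rw [intervalIntegral.integral_sub (Continuous.intervalIntegrable (by fun_prop) _ _)
    (Continuous.intervalIntegrable (by fun_prop) _ _)] at iVV
  have slice1 : ∀ {f : ℝ → ℝ → ℝ}, ContDiff ℝ (⊤ : ℕ∞) (Function.uncurry f) →
      ContDiff ℝ 1 fun x => f x t := fun hf =>
    (hf.of_le l).comp (f := fun x : ℝ => (x, t)) (by fun_prop)
  have pV : ∫ x in a..b, pdx v x t ^ 2 ≤ c₁ ^ 2 * ∫ x in a..b, pdx (pdx v) x t ^ 2 :=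
    poincare_sq hab.le (hc₁prop _ (slice1 sv1) va vb)
  have pU : ∫ x in a..b, pdx u x t ^ 2 ≤ c₁ ^ 2 * ∫ x in a..b, pdx (pdx u) x t ^ 2 :=
    poincare_sq hab.le (hc₁prop _ (slice1 su1) ua ub)
  have hΘ := hsup t ht
  set Y := y t with hYdef
  set S := k₆ + k₇ + k₈ + k₉ + k₆ * M + k₇ * M + k₄ + 4 * k₄ ^ 2 / k₁ with hS
  have hS0 : 0 ≤ S := by positivity
  set C2 := 2 + 4 / k₁ + k₁ / k₄ ^ 2 + 1 / k₃
  set E := ∫ x in a..b, (pdx w x t ^ 2 + pdx (pdx v) x t ^ 2 + pdx (pdx u) x t ^ 2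
      + ε * pdx (pdx (pdx u)) x t ^ 2) with hEdef
  have main : (∫ x in a..b, pdt F x t) + k₁ * ε * (∫ x in a..b, pdx (pdx (pdx v)) x t ^ 2)
      ≤ 10 * (S * (1 + c₂ * (Y + 1))) *
        (E + ((∫ x in a..b, pdx v x t ^ 2) + ∫ x in a..b, pdx u x t ^ 2)) := by
    have iE : IntervalIntegrable (fun x => pdx w x t ^ 2 + pdx (pdx v) x t ^ 2
      + pdx (pdx u) x t ^ 2 + ε * pdx (pdx (pdx u)) x t ^ 2) volume a b :=
      Continuous.intervalIntegrable (by fun_prop) _ _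
    have iV : IntervalIntegrable (fun x => pdx v x t ^ 2) volume a b :=
      (z3.pow 2).intervalIntegrable _ _
    have iU : IntervalIntegrable (fun x => pdx u x t ^ 2) volume a b :=
      (z6.pow 2).intervalIntegrable _ _
    have i3 : IntervalIntegrable (fun x => k₁ * ε * pdx (pdx (pdx v)) x t ^ 2) volume a b :=
      (continuous_const.mul (z5.pow 2)).intervalIntegrable _ _
    rw [hFR, hEdef, ← intervalIntegral.integral_const_mul,
      ← intervalIntegral.integral_add (cR.intervalIntegrable _ _) i3,
      ← intervalIntegral.integral_add iV iU,
      ← intervalIntegral.integral_add iE (iV.add iU),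
      ← intervalIntegral.integral_const_mul]
    refine intervalIntegral.integral_mono_on hab.le ((cR.intervalIntegrable _ _).add i3)
      ((iE.add (iV.add iU)).const_mul _) fun x hx => ?_
    obtain ⟨b1, -, b3, b4, b5, b6, b7, b8, b9⟩ := hbd x hx t ht
    have s1 := abs_le_supIcc z11 hx
    have s2 := abs_le_supIcc z12 hx
    have s3 := supIcc_nonneg a b (fun x => pdx (pdx Θ) x t)
    have s4 : pdx Θ x t ^ 2 ≤ supIcc a b (fun x => pdx Θ x t) ^ 2 := by
      rw [← sq_abs]
      exact pow_le_pow_left₀ (abs_nonneg _) s1 2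
    have s5 := sq_nonneg (supIcc a b (fun x => pdx Θ x t))
    exact remainder_le hα hε0 hε1 hB hM.le (by positivity) (hk₃.le.trans b3) b1 b4 b5 b6 b7 b8 b9
      (by linarith) (by linarith)
  refine main.trans ?_
  have q1 : E + ((∫ x in a..b, pdx v x t ^ 2) + ∫ x in a..b, pdx u x t ^ 2)
      ≤ (1 + c₁ ^ 2) * E := by
    have := mul_le_mul_of_nonneg_left iVV (sq_nonneg c₁)
    linarith
  have q2 : 1 + c₂ * (Y + 1) ≤ (1 + c₂) * (1 + Y) := by linarith
  calc 10 * (S * (1 + c₂ * (Y + 1))) *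
        (E + ((∫ x in a..b, pdx v x t ^ 2) + ∫ x in a..b, pdx u x t ^ 2))
      ≤ 10 * (S * ((1 + c₂) * (1 + Y))) * ((1 + c₁ ^ 2) * (C2 * Y)) := by
        have q3 := q1.trans (mul_le_mul_of_nonneg_left hE (by positivity))
        refine (mul_le_mul_of_nonneg_left q3 (by positivity)).trans ?_
        refine mul_le_mul_of_nonneg_right ?_ (by positivity)
        gcongr
    _ = _ := by ring
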